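/- Let D be a triangulated category, H and H0 hearts of bounded t-structures on D with H[1] ≤ H0 ≤ H[2], and S a rigid simple object of H for which the simple backward tilt H^♭_S is defined. Then the following are equivalent: (i) S[2] ∉ H0; (ii) H0 ≤ H^♭_S[2]; (iii) S[1] ∈ H0. Consequently, exactly one of S[1] ∈ H0 and S[2] ∈ H0 holds; in particular S ∈ H0[-1] or S ∈ H0[-2]. -/

import Mathlib

open CategoryTheory Category Limits Pretriangulated ZeroObject

universe v u

namespace Paper

variable (C : Type u) [Category.{v} C] [HasZeroObject C] [HasShift C ℤ]
  [Preadditive C] [∀ n : ℤ, (shiftFunctor C n).Additive] [Pretriangulated C]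

/-- The right perpendicular of a set of objects: objects receiving no nonzero
morphism from the set. -/
def perp (P : Set C) : Set C := {G | ∀ F ∈ P, ∀ f : F ⟶ G, f = 0}

/-- A bounded t-structure on a (pre)triangulated category, given by its aisle `P`. -/
structure TStr where
  P : Set C
  /-- `P` is closed under direct summands (hence under isomorphism). -/
  summand : ∀ (X Y : C) (i : Y ⟶ X) (r : X ⟶ Y), i ≫ r = 𝟙 Y → X ∈ P → Y ∈ P
  /-- `P[1] ⊆ P`. -/
  shift_mem : ∀ X ∈ P, X⟦(1 : ℤ)⟧ ∈ P
  /-- Every object fits in a triangle `F → E → G → F[1]` with `F ∈ P` and `G ∈ P^⊥`. -/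
  exists_triangle : ∀ E : C, ∃ (F G : C) (f : F ⟶ E) (g : E ⟶ G) (h : G ⟶ F⟦(1 : ℤ)⟧),
    F ∈ P ∧ G ∈ perp C P ∧ Triangle.mk f g h ∈ distTriang C
  /-- `M[k] ∈ P` for `k ≫ 0`. -/
  bounded_above : ∀ M : C, ∃ a : ℤ, ∀ j : ℤ, a ≤ j → M⟦j⟧ ∈ P
  /-- `M[k] ∈ P^⊥` for `k ≪ 0`. -/
  bounded_below : ∀ M : C, ∃ b : ℤ, ∀ j : ℤ, j ≤ b → M⟦j⟧ ∈ perp C P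

/-- The heart `H = P^⊥[1] ∩ P` of a bounded t-structure. -/
def heart (T : TStr C) : Set C := {X | X ∈ T.P ∧ X⟦(-1 : ℤ)⟧ ∈ perp C T.P}

/-- The shift `S[m]` of a set of objects. -/
def shiftSet (S : Set C) (m : ℤ) : Set C := {X | X⟦(-m : ℤ)⟧ ∈ S}

/-- An object `P` is a projective of a heart if `Hom(P, M[k]) = 0` for all `k ≠ 0`
and all `M` in the heart. -/
def IsProjOf (T : TStr C) (P : C) : Prop :=
  ∀ (k : ℤ), k ≠ 0 → ∀ M ∈ heart C T, ∀ f : P ⟶ M⟦k⟧, f = 0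

/-- A filtration of an object `M` by triangles with factors in the heart, shifted by a
strictly decreasing sequence of degrees: the canonical filtration associated to a bounded
t-structure. -/
structure HeartFiltration (T : TStr C) (M : C) where
  n : ℕ
  obj : ℕ → C
  deg : ℕ → ℤ
  factor : ℕ → C
  zero : IsZero (obj 0)
  top : obj n ≅ M
  mem : ∀ i, 1 ≤ i → i ≤ n → factor i ∈ heart C T
  strict : ∀ i j, 1 ≤ i → i < j → j ≤ n → deg j < deg i
  tri : ∀ i, 1 ≤ i → i ≤ n →
    ∃ (f : obj (i - 1) ⟶ obj i) (g : obj i ⟶ (factor i)⟦deg i⟧)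
      (h : (factor i)⟦deg i⟧ ⟶ (obj (i - 1))⟦(1 : ℤ)⟧),
      Triangle.mk f g h ∈ distTriang C

variable {C}

open Classical in
/-- The homology `H^k(M)` of `M` with respect to the heart, read off from a
filtration: the factor in degree `k` if there is one, and `0` otherwise. -/
noncomputable def HeartFiltration.homologyAt {T : TStr C} {M : C}
    (F : HeartFiltration C T M) (k : ℤ) : C :=
  if h : ∃ i, 1 ≤ i ∧ i ≤ F.n ∧ F.deg i = k then F.factor h.choose else 0

variable (C)

/-- A torsion pair `⟨F, T⟩` in the heart of a bounded t-structure: `Hom(T, F) = 0` and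
every object of the heart is an extension (triangle) of an `F`-object by a `T`-object. -/
structure TorsionPairIn (T : TStr C) where
  free : Set C
  tor : Set C
  free_sub : free ⊆ heart C T
  tor_sub : tor ⊆ heart C T
  hom_zero : ∀ X ∈ tor, ∀ Y ∈ free, ∀ f : X ⟶ Y, f = 0
  exists_ses : ∀ E ∈ heart C T, ∃ (A B : C) (f : A ⟶ E) (g : E ⟶ B) (h : B ⟶ A⟦(1 : ℤ)⟧),
    A ∈ tor ∧ B ∈ free ∧ Triangle.mk f g h ∈ distTriang C

/-- The forward tilt `H^♯` of the heart at a torsion pair `⟨free, tor⟩`: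
objects `E` with `H^1(E) ∈ F`, `H^0(E) ∈ T` and `H^i(E) = 0` otherwise. -/
def tiltSharpSet (T : TStr C) (free tor : Set C) : Set C :=
  {E | ∀ (F : HeartFiltration C T E) (i : ℕ), 1 ≤ i → i ≤ F.n →
    IsZero (F.factor i) ∨ (F.deg i = 1 ∧ F.factor i ∈ free) ∨
      (F.deg i = 0 ∧ F.factor i ∈ tor)}

/-- The backward tilt `H^♭` of the heart at a torsion pair `⟨free, tor⟩`:
objects `E` with `H^0(E) ∈ F`, `H^{-1}(E) ∈ T` and `H^i(E) = 0` otherwise. -/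
def tiltFlatSet (T : TStr C) (free tor : Set C) : Set C :=
  {E | ∀ (F : HeartFiltration C T E) (i : ℕ), 1 ≤ i → i ≤ F.n →
    IsZero (F.factor i) ∨ (F.deg i = 0 ∧ F.factor i ∈ free) ∨
      (F.deg i = -1 ∧ F.factor i ∈ tor)}

/-- Simple objects of a heart (or of any full subcategory closed under the abelian
structure): nonzero objects which are not the middle term of a nontrivial short exact
sequence (triangle) in the heart. -/
def IsSimpleIn (H : Set C) (X : C) : Prop :=
  X ∈ H ∧ ¬ IsZero X ∧ ∀ (A B : C) (f : A ⟶ X) (g : X ⟶ B) (h : B ⟶ A⟦(1 : ℤ)⟧),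
    A ∈ H → B ∈ H → Triangle.mk f g h ∈ (distTriang C) → IsZero A ∨ IsZero B

/-- A heart is finite if it has finitely many simples up to isomorphism and every object
is a finite iterated extension of simple objects. -/
def FiniteHeart (T : TStr C) : Prop :=
  (∃ (n : ℕ) (S : Fin n → C), (∀ i, IsSimpleIn C (heart C T) (S i)) ∧
    ∀ X, IsSimpleIn C (heart C T) X → ∃ i, Nonempty (X ≅ S i)) ∧
  ∀ M ∈ heart C T, ∃ (m : ℕ) (obj : ℕ → C), IsZero (obj 0) ∧ Nonempty (obj m ≅ M) ∧
    ∀ i < m, ∃ (s : C) (f : obj i ⟶ obj (i + 1)) (g : obj (i + 1) ⟶ s)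
      (h : s ⟶ (obj i)⟦(1 : ℤ)⟧),
      IsSimpleIn C (heart C T) s ∧ Triangle.mk f g h ∈ distTriang C

section Biproducts

variable [HasFiniteBiproducts C]

/-- Finite direct sums of copies of an object `S`. -/
def addObj (S : C) : Set C := {M | ∃ n : ℕ, Nonempty (M ≅ ⨁ (fun _ : Fin n => S))}

/-- The simple forward tilt `H^♯_S` of the heart at a rigid simple `S`: the forward tilt
at the torsion pair whose free part consists of finite direct sums of copies of `S`. -/
def simpleSharpSet (T : TStr C) (S : C) : Set C :=
  tiltSharpSet C T (addObj C S) {M | M ∈ heart C T ∧ ∀ f : M ⟶ S, f = 0}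

/-- The simple backward tilt `H^♭_S` of the heart at a rigid simple `S`: the backward
tilt at the torsion pair whose torsion part consists of finite direct sums of copies
of `S`. -/
def simpleFlatSet (T : TStr C) (S : C) : Set C :=
  tiltFlatSet C T {M | M ∈ heart C T ∧ ∀ f : S ⟶ M, f = 0} (addObj C S)

end Biproducts


/-!
Degrees with respect to a bounded t-structure turn `H[1] ≤ H0 ≤ H[2]` into the inclusions
`D^{≤ 1} ⊆ D_H^{≤ 0} ⊆ D^{≤ 2}`, the unadorned aisles being those of `H0`. Hence `S` has degrees in
`[1, 2]` with respect to `H0`, so that `S[1] ∈ H0` means `S ∈ D^{≤ 1}` and `S[2] ∈ H0` means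
`S ∈ D^{≥ 2}`. Both ends of the triangle `A ⟶ S ⟶ B ⟶ A[1]` truncating `S` at these degrees lie in
`H`, so one of them vanishes because `S` is simple, and not both because `S ≠ 0`. Finally the
objects of `H^♭_S` are extensions of objects of `H`, which all lie in `D^{≤ 2}`, by sums of copies
of `S[-1]`; therefore `H^♭_S` is contained in `D^{≤ 2}` exactly when `S` lies in `D^{≤ 1}`.
-/

open Triangulated

section Triangulated

variable {C}

lemma distinguished_of_iso₃ {X Y Z Z' : C} {f : X ⟶ Y} {g : Y ⟶ Z} {h : Z ⟶ X⟦(1 : ℤ)⟧}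
    (hT : Triangle.mk f g h ∈ distTriang C) (e : Z ≅ Z') :
    Triangle.mk f (g ≫ e.hom) (e.inv ≫ h) ∈ distTriang C := by
  refine isomorphic_distinguished _ hT _
    (Triangle.isoMk _ _ (Iso.refl X) (Iso.refl Y) e.symm ?_ ?_ ?_)
  · exact (comp_id f).trans (id_comp f).symm
  · change (g ≫ e.hom) ≫ e.inv = 𝟙 Y ≫ g
    simp
  · change (e.inv ≫ h) ≫ (𝟙 X)⟦(1 : ℤ)⟧' = e.inv ≫ h
    simp

lemma isLE₃ (t : TStructure C) (A : Triangle C) (hA : A ∈ distTriang C) (n : ℤ)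
    (h₁ : t.IsLE A.obj₁ (n + 1)) (h₂ : t.IsLE A.obj₂ n) : t.IsLE A.obj₃ n :=
  t.isLE₂ _ (rot_of_distTriang _ hA) n h₂ (t.isLE_shift A.obj₁ (n + 1) 1 n)

lemma isGE₁ (t : TStructure C) (A : Triangle C) (hA : A ∈ distTriang C) (n : ℤ)
    (h₂ : t.IsGE A.obj₂ n) (h₃ : t.IsGE A.obj₃ (n - 1)) : t.IsGE A.obj₁ n :=
  t.isGE₂ _ (inv_rot_of_distTriang _ hA) n (t.isGE_shift A.obj₃ (n - 1) (-1) n) h₂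

lemma isLE_biproduct (t : TStructure C) {ι : Type*} (X : ι → C) [HasBiproduct X] (n : ℤ)
    [∀ i, t.IsLE (X i) n] : t.IsLE (⨁ X) n := by
  rw [t.isLE_iff_orthogonal n (n + 1) rfl]
  intro Y f hY
  refine biproduct.hom_ext' _ _ fun i ↦ ?_
  rw [t.zero (biproduct.ι X i ≫ f) n (n + 1), comp_zero]

variable {t t' : TStructure C}

lemma le_add_le_le_add {a b : ℤ} (h : t.le a ≤ t'.le b) (c : ℤ) :
    t.le (a + c) ≤ t'.le (b + c) := by
  rw [← t.shift_le c a (a + c) (by lia), ← t'.shift_le c b (b + c) (by lia)]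
  exact fun X hX ↦ h _ hX

lemma ge_le_ge_of_le_le_le {a b : ℤ} (h : t.le a ≤ t'.le b) : t'.ge b ≤ t.ge a := by
  intro X hX
  rw [t.ge_iff_isGE, t.isGE_iff_orthogonal (a - 1) a (by lia)]
  intro Y f hY
  exact t'.zero_of_isLE_of_isGE f (b - 1) b (by lia)
    ⟨le_add_le_le_add h (-1) Y hY.le⟩ ⟨hX⟩

end Triangulated

section TStr

variable {C}

omit [HasZeroObject C] [HasShift C ℤ] [∀ n : ℤ, (shiftFunctor C n).Additive]
  [Pretriangulated C] in
lemma mem_perp_of_iso {P : Set C} {X Y : C} (e : X ≅ Y) (hX : X ∈ perp C P) : Y ∈ perp C P := by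
  intro F hF f
  rw [← cancel_mono e.inv, zero_comp]
  exact hX F hF _

lemma TStr.mem_P_of_iso (T : TStr C) {X Y : C} (e : X ≅ Y) (hX : X ∈ T.P) : Y ∈ T.P :=
  T.summand X Y e.inv e.hom e.inv_hom_id hX

/-- The t-structure in Mathlib's cohomological indexing attached to an aisle `P`: an object `X` is
in degrees `≤ n` if `X[n] ∈ P`, and in degrees `≥ n` if `X[n - 1] ∈ P^⊥`. -/
def TStr.toTStructure (T : TStr C) : TStructure C where
  le n X := X⟦n⟧ ∈ T.P
  ge n X := X⟦n - 1⟧ ∈ perp C T.P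
  le_isClosedUnderIsomorphisms n := ⟨fun e ↦ T.mem_P_of_iso ((shiftFunctor C n).mapIso e)⟩
  ge_isClosedUnderIsomorphisms n := ⟨fun e ↦ mem_perp_of_iso ((shiftFunctor C (n - 1)).mapIso e)⟩
  le_shift n a n' h X := T.mem_P_of_iso ((shiftFunctorAdd' C a n' n h).app X)
  ge_shift n a n' h X :=
    mem_perp_of_iso ((shiftFunctorAdd' C a (n' - 1) (n - 1) (by lia)).app X)
  zero' X Y f hX hY :=
    mem_perp_of_iso ((shiftFunctorZero' C (1 - 1 : ℤ) (by simp)).app Y) hY X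
      (T.mem_P_of_iso ((shiftFunctorZero C ℤ).app X) hX) f
  le_zero_le X hX := T.shift_mem X (T.mem_P_of_iso ((shiftFunctorZero C ℤ).app X) hX)
  ge_one_le X hX F hF f := by
    apply (shiftFunctor C (1 : ℤ)).map_injective
    rw [Functor.map_zero]
    exact mem_perp_of_iso ((shiftFunctorAdd' C (0 - 1 : ℤ) 1 (1 - 1) (by simp)).app X) hX
      _ (T.shift_mem F hF) _
  exists_triangle_zero_one E := by
    obtain ⟨F, G, f, g, h, hF, hG, hT⟩ := T.exists_triangle E
    exact ⟨F, G, T.mem_P_of_iso ((shiftFunctorZero C ℤ).symm.app F) hF,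
      mem_perp_of_iso ((shiftFunctorZero' C (1 - 1 : ℤ) (by simp)).symm.app G) hG, f, g, h, hT⟩

namespace TStr

variable (T T' : TStr C)

lemma mem_P_iff (X : C) : X ∈ T.P ↔ T.toTStructure.le 0 X :=
  ⟨T.mem_P_of_iso ((shiftFunctorZero C ℤ).symm.app X),
    T.mem_P_of_iso ((shiftFunctorZero C ℤ).app X)⟩

lemma mem_heart_iff (X : C) :
    X ∈ heart C T ↔ T.toTStructure.IsLE X 0 ∧ T.toTStructure.IsGE X 0 :=
  and_congr ((T.mem_P_iff X).trans (T.toTStructure.le_iff_isLE X 0))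
    (T.toTStructure.ge_iff_isGE X 0)

lemma shift_mem_heart_iff (X : C) (n : ℤ) :
    X⟦n⟧ ∈ heart C T ↔ T.toTStructure.IsLE X n ∧ T.toTStructure.IsGE X n := by
  rw [T.mem_heart_iff, T.toTStructure.isLE_shift_iff X n n 0, T.toTStructure.isGE_shift_iff X n n 0]

lemma P_subset_shiftSet_iff (m : ℤ) :
    T.P ⊆ shiftSet C T'.P m ↔ T.toTStructure.le m ≤ T'.toTStructure.le 0 := by
  have h : T.P ⊆ shiftSet C T'.P m ↔ T.toTStructure.le 0 ≤ T'.toTStructure.le (-m) :=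
    forall_congr' fun X ↦ imp_congr_left (T.mem_P_iff X)
  rw [h]
  exact ⟨fun h ↦ by simpa using le_add_le_le_add h m,
    fun h ↦ by simpa using le_add_le_le_add h (-m)⟩

lemma shiftSet_P_subset_iff (m : ℤ) :
    shiftSet C T.P m ⊆ T'.P ↔ T.toTStructure.le 0 ≤ T'.toTStructure.le m := by
  have h : shiftSet C T.P m ⊆ T'.P ↔ T.toTStructure.le (-m) ≤ T'.toTStructure.le 0 :=
    forall_congr' fun X ↦ imp_congr_right fun _ ↦ T'.mem_P_iff X
  rw [h]
  exact ⟨fun h ↦ by simpa using le_add_le_le_add h m,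
    fun h ↦ by simpa using le_add_le_le_add h (-m)⟩

lemma exists_isLE (X : C) : ∃ n : ℤ, T.toTStructure.IsLE X n := by
  obtain ⟨a, ha⟩ := T.bounded_above X
  exact ⟨a, ⟨ha a le_rfl⟩⟩

lemma exists_isGE (X : C) : ∃ n : ℤ, T.toTStructure.IsGE X n := by
  obtain ⟨b, hb⟩ := T.bounded_below X
  exact ⟨b, ⟨hb (b - 1) (by lia)⟩⟩

end TStr

end TStr

section HeartFiltration

variable {C}

/-- The tower `⋯ ⟶ τ^{≤ k - 2} τ^{≤ k - 1} E ⟶ τ^{≤ k - 1} E ⟶ E` of truncations of an object `E` in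
degrees `≤ k`. It underlies the canonical filtration of `E`; the truncations are iterated because
comparing them with the truncations of `E` itself would require the octahedral axiom. -/
noncomputable def truncTower (t : TStructure C) (E : C) (k : ℤ) : ℕ → C
  | 0 => E
  | s + 1 => (t.truncLE (k - s - 1)).obj (truncTower t E k s)

lemma isLE_truncTower (t : TStructure C) (E : C) (k : ℤ) [t.IsLE E k] (s : ℕ) :
    t.IsLE (truncTower t E k s) (k - s) := by
  cases s with
  | zero => simpa [truncTower]
  | succ s => exact t.isLE_truncLE_obj _ _ _

lemma isGE_truncTower (t : TStructure C) (E : C) (k b : ℤ) [t.IsGE E b] (s : ℕ)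
    (hs : b + s ≤ k + 1) : t.IsGE (truncTower t E k s) b := by
  induction s with
  | zero => assumption
  | succ s ih =>
    refine isGE₁ t _ (t.triangleLEGE_distinguished (k - s - 1) (k - s) (by lia) _) b
      (ih (by lia)) ?_
    exact t.isGE_truncGE_obj _ _ _

lemma truncTower_shift_truncGE_mem_heart (T : TStr C) (E : C) (k : ℤ) [T.toTStructure.IsLE E k]
    (s : ℕ) :
    ((T.toTStructure.truncGE (k - s)).obj (truncTower T.toTStructure E k s))⟦k - s⟧ ∈
      heart C T := by
  let t := T.toTStructure
  rw [T.shift_mem_heart_iff]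
  refine ⟨isLE₃ t _ (t.triangleLEGE_distinguished (k - s - 1) (k - s) (by lia) _) _ ?_
    (isLE_truncTower t E k s), t.isGE_truncGE_obj _ _ _⟩
  exact t.isLE_truncLE_obj _ _ _

/-- The canonical filtration of an object concentrated in the degrees from `k - n + 1` to `k`. -/
noncomputable def TStr.canonicalFiltration (T : TStr C) (E : C) (k : ℤ) (n : ℕ)
    [T.toTStructure.IsLE E k] [T.toTStructure.IsGE E (k - n + 1)] : HeartFiltration C T E where
  n := n
  obj i := truncTower T.toTStructure E k (n - i)
  deg i := -(k - (n - i : ℕ))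
  factor i := ((T.toTStructure.truncGE (k - (n - i : ℕ))).obj
    (truncTower T.toTStructure E k (n - i)))⟦k - (n - i : ℕ)⟧
  zero :=
    have := isLE_truncTower T.toTStructure E k n
    have := isGE_truncTower T.toTStructure E k (k - n + 1) n (by lia)
    T.toTStructure.isZero _ (k - n) (k - n + 1)
  top := eqToIso (by rw [Nat.sub_self, truncTower])
  mem _ _ _ := truncTower_shift_truncGE_mem_heart T E k _
  strict := by lia
  tri i hi hi' := by
    rw [show n - (i - 1) = (n - i) + 1 by lia]
    exact ⟨_, _, _, distinguished_of_iso₃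
      (T.toTStructure.triangleLEGE_distinguished _ _ (by lia) _)
      ((shiftEquiv C (k - (n - i : ℕ))).unitIso.app _)⟩

lemma TStr.exists_heartFiltration (T : TStr C) (E : C) (k : ℤ) [T.toTStructure.IsLE E k] :
    ∃ F : HeartFiltration C T E, ∀ i, -k ≤ F.deg i := by
  obtain ⟨b, _⟩ := T.exists_isGE E
  obtain ⟨n, hn⟩ : ∃ n : ℕ, k - n + 1 ≤ b := ⟨(k + 1 - b).toNat, by lia⟩
  have := T.toTStructure.isGE_of_ge E (k - n + 1) b
  exact ⟨T.canonicalFiltration E k n, fun i ↦ by simp [canonicalFiltration]⟩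

namespace HeartFiltration

variable {T : TStr C} {M : C} (F : HeartFiltration C T M)

lemma isLE_obj (t : TStructure C) (n : ℤ) (j : ℕ) (hj : j ≤ F.n)
    (hF : ∀ i, 1 ≤ i → i ≤ j → t.IsLE ((F.factor i)⟦F.deg i⟧) n) : t.IsLE (F.obj j) n := by
  induction j with
  | zero => exact t.isLE_of_isZero F.zero n
  | succ j ih =>
    obtain ⟨f, g, h, hT⟩ := F.tri (j + 1) (by lia) hj
    exact t.isLE₂ _ hT n (ih (by lia) fun i hi hi' ↦ hF i hi (by lia)) (hF _ (by lia) le_rfl)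

lemma isLE (t : TStructure C) (n : ℤ)
    (hF : ∀ i, 1 ≤ i → i ≤ F.n → t.IsLE ((F.factor i)⟦F.deg i⟧) n) : t.IsLE M n :=
  have := F.isLE_obj t n F.n le_rfl hF
  t.isLE_of_iso F.top n

variable {i : ℕ} (hi : 1 ≤ i) (hi' : i ≤ F.n)

include hi hi'

lemma isLE_factor_shift : T.toTStructure.IsLE ((F.factor i)⟦F.deg i⟧) (-F.deg i) :=
  have := ((T.mem_heart_iff _).1 (F.mem i hi hi')).1
  T.toTStructure.isLE_shift _ 0 _ _

lemma isGE_factor_shift : T.toTStructure.IsGE ((F.factor i)⟦F.deg i⟧) (-F.deg i) :=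
  have := ((T.mem_heart_iff _).1 (F.mem i hi hi')).2
  T.toTStructure.isGE_shift _ 0 _ _

lemma isLE_obj_pred : T.toTStructure.IsLE (F.obj (i - 1)) (-F.deg i - 1) := by
  refine F.isLE_obj _ _ _ (by lia) fun j hj hj' ↦ ?_
  have := F.isLE_factor_shift hj (by lia)
  have := F.strict j i hj (by lia) hi'
  exact T.toTStructure.isLE_of_le ((F.factor j)⟦F.deg j⟧) (-F.deg j) _

lemma isLE_obj_neg_deg : T.toTStructure.IsLE (F.obj i) (-F.deg i) := by
  obtain ⟨f, g, h, hT⟩ := F.tri i hi hi'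
  have := F.isLE_obj_pred hi hi'
  exact T.toTStructure.isLE₂ _ hT _ (T.toTStructure.isLE_of_le (F.obj (i - 1)) (-F.deg i - 1) _)
    (F.isLE_factor_shift hi hi')

lemma isZero_factor_shift_of_isLE_obj (h : T.toTStructure.IsLE (F.obj i) (-F.deg i - 1)) :
    IsZero ((F.factor i)⟦F.deg i⟧) := by
  obtain ⟨f, g, δ, hT⟩ := F.tri i hi hi'
  have := F.isLE_obj_pred hi hi'
  have := F.isGE_factor_shift hi hi'
  have : T.toTStructure.IsLE ((F.factor i)⟦F.deg i⟧) (-F.deg i - 1) :=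
    isLE₃ T.toTStructure _ hT _ (T.toTStructure.isLE_of_le (F.obj (i - 1)) (-F.deg i - 1) _) h
  exact T.toTStructure.isZero _ (-F.deg i - 1) (-F.deg i)

lemma isZero_factor_shift_of_ne (n : ℤ) [T.toTStructure.IsLE (F.obj i) n]
    [T.toTStructure.IsGE (F.obj i) n] (h : F.deg i ≠ -n) : IsZero ((F.factor i)⟦F.deg i⟧) := by
  let t := T.toTStructure
  apply F.isZero_factor_shift_of_isLE_obj hi hi'
  rcases h.lt_or_gt with hlt | hgt
  · exact t.isLE_of_le _ n _
  · have := F.isLE_obj_neg_deg hi hi'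
    exact t.isLE_of_isZero (t.isZero _ (-F.deg i) n) _

lemma nonempty_iso_obj_pred (h : IsZero ((F.factor i)⟦F.deg i⟧)) :
    Nonempty (F.obj (i - 1) ≅ F.obj i) := by
  obtain ⟨f, g, δ, hT⟩ := F.tri i hi hi'
  have : IsIso f := (Triangle.isZero₃_iff_isIso₁ _ hT).1 h
  exact ⟨asIso f⟩

lemma isZero_obj_pred_of_isGE_obj (h : T.toTStructure.IsGE (F.obj i) (-F.deg i)) :
    IsZero (F.obj (i - 1)) := by
  let t := T.toTStructure
  obtain ⟨f, g, δ, hT⟩ := F.tri i hi hi'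
  have := F.isLE_obj_pred hi hi'
  have := F.isGE_factor_shift hi hi'
  have : t.IsGE (F.obj (i - 1)) (-F.deg i) := isGE₁ t _ hT _ h
    (t.isGE_of_ge ((F.factor i)⟦F.deg i⟧) _ (-F.deg i))
  exact t.isZero _ (-F.deg i - 1) (-F.deg i)

lemma nonempty_factor_shift_iso_obj (h : T.toTStructure.IsGE (F.obj i) (-F.deg i)) :
    Nonempty ((F.factor i)⟦F.deg i⟧ ≅ F.obj i) := by
  obtain ⟨f, g, δ, hT⟩ := F.tri i hi hi'
  have : IsIso g :=
    (Triangle.isZero₁_iff_isIso₂ _ hT).1 (F.isZero_obj_pred_of_isGE_obj hi hi' h)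
  exact ⟨(asIso g).symm⟩

omit hi in
lemma isZero_obj_or_nonempty_iso (n : ℤ) [T.toTStructure.IsLE M n] [T.toTStructure.IsGE M n] :
    IsZero (F.obj i) ∨ Nonempty (F.obj i ≅ M) := by
  let t := T.toTStructure
  induction hi' using Nat.decreasingInduction with
  | self => exact .inr ⟨F.top⟩
  | of_succ i hi ih =>
    obtain hz | ⟨⟨e⟩⟩ := ih
    · obtain ⟨e⟩ := F.nonempty_iso_obj_pred (by lia) hi
        (F.isZero_factor_shift_of_isLE_obj (by lia) hi (t.isLE_of_isZero hz _))
      exact .inl (hz.of_iso e)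
    · have := t.isLE_of_iso e.symm n
      have := t.isGE_of_iso e.symm n
      by_cases hn : F.deg (i + 1) = -n
      · exact .inl (F.isZero_obj_pred_of_isGE_obj (by lia) hi (by rwa [hn, neg_neg]))
      · obtain ⟨e'⟩ := F.nonempty_iso_obj_pred (by lia) hi
          (F.isZero_factor_shift_of_ne (by lia) hi n hn)
        exact .inr ⟨e' ≪≫ e⟩

lemma isZero_factor_or_nonempty_iso (n : ℤ) [T.toTStructure.IsLE M n] [T.toTStructure.IsGE M n] :
    IsZero (F.factor i) ∨ F.deg i = -n ∧ Nonempty ((F.factor i)⟦-n⟧ ≅ M) := by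
  let t := T.toTStructure
  have isZero_factor (hz : IsZero ((F.factor i)⟦F.deg i⟧)) : IsZero (F.factor i) :=
    ((shiftFunctor C (-F.deg i)).map_isZero hz).of_iso ((shiftEquiv C (F.deg i)).unitIso.app _)
  obtain hz | ⟨⟨e⟩⟩ := F.isZero_obj_or_nonempty_iso hi' n
  · exact .inl (isZero_factor
      (F.isZero_factor_shift_of_isLE_obj hi hi' (t.isLE_of_isZero hz _)))
  have := t.isLE_of_iso e.symm n
  have := t.isGE_of_iso e.symm n
  by_cases hn : F.deg i = -n
  · obtain ⟨e'⟩ := F.nonempty_factor_shift_iso_obj hi hi' (by rwa [hn, neg_neg])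
    exact .inr ⟨hn, ⟨eqToIso (by rw [hn]) ≪≫ e' ≪≫ e⟩⟩
  · exact .inl (isZero_factor (F.isZero_factor_shift_of_ne hi hi' n hn))

end HeartFiltration

lemma TStr.le_zero_le_iff (T : TStr C) (t : TStructure C) (m : ℤ) :
    T.toTStructure.le 0 ≤ t.le m ↔ ∀ E ∈ heart C T, t.IsLE E m := by
  refine ⟨fun h E hE ↦ ⟨h E ((T.mem_P_iff E).1 hE.1)⟩, fun h E hE ↦ ?_⟩
  have : T.toTStructure.IsLE E 0 := ⟨hE⟩
  obtain ⟨F, hdeg⟩ := T.exists_heartFiltration E 0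
  rw [t.le_iff_isLE]
  refine F.isLE t m fun i hi hi' ↦ ?_
  have := h _ (F.mem i hi hi')
  have := t.isLE_shift (F.factor i) m (F.deg i) (m - F.deg i)
  have := hdeg i
  exact t.isLE_of_le _ (m - F.deg i) _

end HeartFiltration

section Tilt

variable {C}
variable {T : TStr C} {free tor : Set C}

lemma shift_neg_one_mem_tiltFlatSet (htor : ∀ {X Y : C}, (X ≅ Y) → X ∈ tor → Y ∈ tor) {X : C}
    (hX : X ∈ heart C T) (hX' : X ∈ tor) : X⟦(-1 : ℤ)⟧ ∈ tiltFlatSet C T free tor := by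
  obtain ⟨_, _⟩ := (T.mem_heart_iff X).1 hX
  have := T.toTStructure.isLE_shift X 0 (-1) 1
  have := T.toTStructure.isGE_shift X 0 (-1) 1
  intro F i hi hi'
  exact (F.isZero_factor_or_nonempty_iso hi hi' 1).imp_right fun ⟨hdeg, ⟨e⟩⟩ ↦
    .inr ⟨hdeg, htor ((shiftFunctor C (-1 : ℤ)).preimageIso e).symm hX'⟩

lemma isLE_of_mem_tiltFlatSet {t : TStructure C} {n m : ℤ} (hnm : n + 1 = m)
    (hT : T.toTStructure.le 0 ≤ t.le m) (htor : ∀ X ∈ tor, t.IsLE X n) {E : C}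
    (hE : E ∈ tiltFlatSet C T free tor) : t.IsLE E m := by
  obtain ⟨k, _⟩ := T.exists_isLE E
  obtain ⟨F, -⟩ := T.exists_heartFiltration E k
  refine F.isLE t m fun i hi hi' ↦ ?_
  obtain hz | ⟨hdeg, -⟩ | ⟨hdeg, htors⟩ := hE F i hi hi'
  · exact t.isLE_of_isZero ((shiftFunctor C _).map_isZero hz) _
  · have := (T.le_zero_le_iff t m).1 hT _ (F.mem i hi hi')
    exact t.isLE_shift (F.factor i) m _ _
  · have := htor _ htors
    exact t.isLE_shift (F.factor i) n _ _

section Simple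

variable [HasFiniteBiproducts C] (S : C)

omit [HasZeroObject C] [HasShift C ℤ] [∀ n : ℤ, (shiftFunctor C n).Additive]
  [Pretriangulated C] in
lemma mem_addObj_self : S ∈ addObj C S :=
  ⟨1, ⟨(biproductUniqueIso fun _ : Fin 1 ↦ S).symm⟩⟩

variable {S}

omit [HasZeroObject C] [HasShift C ℤ] [∀ n : ℤ, (shiftFunctor C n).Additive]
  [Pretriangulated C] in
lemma mem_addObj_of_iso {X Y : C} (e : X ≅ Y) : X ∈ addObj C S → Y ∈ addObj C S :=
  fun ⟨n, ⟨e'⟩⟩ ↦ ⟨n, ⟨e.symm ≪≫ e'⟩⟩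

lemma isLE_of_mem_addObj (t : TStructure C) (n : ℤ) [t.IsLE S n] {X : C}
    (hX : X ∈ addObj C S) : t.IsLE X n := by
  obtain ⟨k, ⟨e⟩⟩ := hX
  have := isLE_biproduct t (fun _ : Fin k ↦ S) n
  exact t.isLE_of_iso e.symm n

lemma le_zero_le_iff_of_heart_eq_simpleFlatSet {T' : TStr C}
    (hT' : heart C T' = simpleFlatSet C T S) (hS : S ∈ heart C T) {t : TStructure C} {n m : ℤ}
    (hnm : n + 1 = m) (hT : T.toTStructure.le 0 ≤ t.le m) :
    T'.toTStructure.le 0 ≤ t.le m ↔ t.IsLE S n := by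
  rw [T'.le_zero_le_iff, hT']
  constructor
  · intro h
    have := h _ (shift_neg_one_mem_tiltFlatSet mem_addObj_of_iso hS (mem_addObj_self S))
    exact t.isLE_of_shift S n (-1) m
  · intro _ E hE
    exact isLE_of_mem_tiltFlatSet hnm hT (fun _ ↦ isLE_of_mem_addObj t n) hE

end Simple

end Tilt

section IntermediateHeart

variable {C}
variable {T T' : TStr C} {n m : ℤ}

lemma shift_mem_heart_iff_isLE (hle : T'.toTStructure.le n ≤ T.toTStructure.le 0) {X : C}
    (hX : X ∈ heart C T) : X⟦n⟧ ∈ heart C T' ↔ T'.toTStructure.IsLE X n := by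
  rw [T'.shift_mem_heart_iff]
  exact and_iff_left ⟨ge_le_ge_of_le_le_le hle X ((T.mem_heart_iff X).1 hX).2.ge⟩

lemma shift_mem_heart_iff_isGE (hle : T.toTStructure.le 0 ≤ T'.toTStructure.le m) {X : C}
    (hX : X ∈ heart C T) : X⟦m⟧ ∈ heart C T' ↔ T'.toTStructure.IsGE X m := by
  rw [T'.shift_mem_heart_iff]
  exact and_iff_right ⟨hle X ((T.mem_heart_iff X).1 hX).1.le⟩

lemma isLE_or_isGE_of_isSimpleIn {t : TStructure C} (hnm : n + 1 = m)
    (hle : t.le n ≤ T.toTStructure.le 0) (hle' : T.toTStructure.le 0 ≤ t.le m) {S : C}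
    (hS : IsSimpleIn C (heart C T) S) : t.IsLE S n ∨ t.IsGE S m := by
  let tT := T.toTStructure
  obtain ⟨hLE, hGE⟩ := (T.mem_heart_iff S).1 hS.1
  have hA : tT.IsLE ((t.truncLE n).obj S) 0 := ⟨hle _ (t.le_of_isLE _ n)⟩
  have hB : tT.IsGE ((t.truncGE m).obj S) 0 :=
    ⟨ge_le_ge_of_le_le_le hle' _ (t.ge_of_isGE _ m)⟩
  have hT := t.triangleLEGE_distinguished n m hnm S
  have hA' : tT.IsGE ((t.truncLE n).obj S) 0 :=
    isGE₁ tT _ hT 0 hGE (tT.isGE_of_ge ((t.truncGE m).obj S) _ 0)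
  have hB' : tT.IsLE ((t.truncGE m).obj S) 0 :=
    isLE₃ tT _ hT 0 (tT.isLE_of_le ((t.truncLE n).obj S) 0 _) hLE
  obtain hz | hz := hS.2.2 _ _ _ _ _ ((T.mem_heart_iff _).2 ⟨hA, hA'⟩)
    ((T.mem_heart_iff _).2 ⟨hB', hB⟩) hT
  · exact .inr ((t.isGE_iff_isZero_truncLE_obj n m hnm S).2 hz)
  · exact .inl ((t.isLE_iff_isZero_truncGE_obj n m hnm S).2 hz)

lemma xor_shift_mem_heart_of_isSimpleIn (hnm : n + 1 = m)
    (hle : T'.toTStructure.le n ≤ T.toTStructure.le 0)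
    (hle' : T.toTStructure.le 0 ≤ T'.toTStructure.le m) {S : C}
    (hS : IsSimpleIn C (heart C T) S) :
    Xor (S⟦n⟧ ∈ heart C T') (S⟦m⟧ ∈ heart C T') := by
  rw [shift_mem_heart_iff_isLE hle hS.1, shift_mem_heart_iff_isGE hle' hS.1, xor_iff_or_and_not_and]
  exact ⟨isLE_or_isGE_of_isSimpleIn hnm hle hle' hS,
    fun ⟨_, _⟩ ↦ hS.2.1 (T'.toTStructure.isZero S n m)⟩

end IntermediateHeart

/-- Let `H`, `H0` be hearts with `H[1] ≤ H0 ≤ H[2]` and `S` a rigid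
simple of `H` for which the simple backward tilt `H^♭_S` is defined.  Then the following
are equivalent: (i) `S[2] ∉ H0`; (ii) `H0 ≤ H^♭_S[2]`; (iii) `S[1] ∈ H0`.
Consequently exactly one of `S[1] ∈ H0`, `S[2] ∈ H0` holds; in particular
`S ∈ H0[-1]` or `S ∈ H0[-2]`. -/
theorem statement_18 [HasFiniteBiproducts C] (T T0 : TStr C)
    (h1 : T0.P ⊆ shiftSet C T.P 1) (h2 : shiftSet C T.P 2 ⊆ T0.P)
    (S : C) (hS : IsSimpleIn C (heart C T) S)
    (hrigid : ∀ f : S ⟶ S⟦(1 : ℤ)⟧, f = 0)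
    (Tflat : TStr C) (h : heart C Tflat = simpleFlatSet C T S) :
    List.TFAE [S⟦(2 : ℤ)⟧ ∉ heart C T0,
      shiftSet C Tflat.P 2 ⊆ T0.P,
      S⟦(1 : ℤ)⟧ ∈ heart C T0] ∧
    Xor' (S⟦(1 : ℤ)⟧ ∈ heart C T0) (S⟦(2 : ℤ)⟧ ∈ heart C T0) ∧
    (S ∈ shiftSet C (heart C T0) (-1) ∨ S ∈ shiftSet C (heart C T0) (-2)) := by
  have hle := (T0.P_subset_shiftSet_iff T 1).1 h1
  have hle' := (T.shiftSet_P_subset_iff T0 2).1 h2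
  have hxor := xor_shift_mem_heart_of_isSimpleIn (by simp) hle hle' hS
  have hflat : shiftSet C Tflat.P 2 ⊆ T0.P ↔ S⟦(1 : ℤ)⟧ ∈ heart C T0 := by
    rw [Tflat.shiftSet_P_subset_iff, shift_mem_heart_iff_isLE hle hS.1]
    exact le_zero_le_iff_of_heart_eq_simpleFlatSet h hS.1 (by simp) hle'
  refine ⟨?_, hxor, hxor.or⟩
  tfae_have 1 ↔ 3 := (xor_iff_iff_not.1 hxor).symm
  tfae_have 2 ↔ 3 := hflat
  tfae_finish

end Paper
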